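/- Let G be a finite simple graph. Then 2 · ∑_{ {u,v} ∉ E(G), u ≠ v } d_u d_v = 2·t(G) + A(G), where the sum runs over unordered pairs of distinct non-adjacent vertices of G. In words: the sum of the products of the degrees over non-adjacent pairs equals the number of 3-element vertex subsets spanning exactly two edges plus half the number of ordered alternating 3-edge paths. -/

import Mathlib

open Finset SimpleGraph
open scoped Classical

/-- The sum of `d_u * d_v` over unordered pairs `{u,v}` of distinct non-adjacent
vertices of `G`. -/
noncomputable def nonEdgeDegSum {n : ℕ} (G : SimpleGraph (Fin n)) : ℕ :=
  ∑ e ∈ (Finset.univ : Finset (Sym2 (Fin n))).filter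
      (fun e => ¬ e.IsDiag ∧ e ∉ G.edgeFinset),
    Sym2.lift ⟨fun u v => G.degree u * G.degree v, fun _ _ => mul_comm _ _⟩ e

/-- `A G` is the number of ordered quadruples `(u,v,w,x)` of pairwise distinct vertices
with `uv`, `wx` edges and `vw` a non-edge (ordered alternating 3-edge paths). -/
noncomputable def A {n : ℕ} (G : SimpleGraph (Fin n)) : ℕ :=
  Finset.card <| (Finset.univ : Finset (Fin n × Fin n × Fin n × Fin n)).filter
    fun p =>
      p.1 ≠ p.2.1 ∧ p.1 ≠ p.2.2.1 ∧ p.1 ≠ p.2.2.2 ∧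
      p.2.1 ≠ p.2.2.1 ∧ p.2.1 ≠ p.2.2.2 ∧ p.2.2.1 ≠ p.2.2.2 ∧
      G.Adj p.1 p.2.1 ∧ G.Adj p.2.2.1 p.2.2.2 ∧ ¬ G.Adj p.2.1 p.2.2.1

/-- `t G` is the number of 3-element vertex subsets of `G` spanning exactly two edges. -/
noncomputable def t {n : ℕ} (G : SimpleGraph (Fin n)) : ℕ :=
  Finset.card <| (Finset.powersetCard 3 (Finset.univ : Finset (Fin n))).filter
    fun S => (G.edgeFinset.filter fun e => ∀ v ∈ e, v ∈ S).card = 2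

/-- Ordered form of the degree sum. -/
lemma two_mul_nonEdgeDegSum {n : ℕ} (G : SimpleGraph (Fin n)) :
    2 * nonEdgeDegSum G =
      ∑ p ∈ (Finset.univ : Finset (Fin n × Fin n)).filter
        (fun p => p.1 ≠ p.2 ∧ ¬ G.Adj p.1 p.2), G.degree p.1 * G.degree p.2 := by
  unfold nonEdgeDegSum
  rw [← Finset.sum_fiberwise_of_maps_to (g := fun p : Fin n × Fin n => s(p.1, p.2))
    (t := (Finset.univ : Finset (Sym2 (Fin n))).filter
      (fun e => ¬ e.IsDiag ∧ e ∉ G.edgeFinset)), Finset.mul_sum]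
  · refine Finset.sum_congr rfl ?_
    intro e
    induction e using Sym2.ind with
    | _ a b =>
      intro he
      simp only [Finset.mem_filter, Finset.mem_univ, true_and, Sym2.mk_isDiag_iff,
        SimpleGraph.mem_edgeFinset, SimpleGraph.mem_edgeSet] at he
      obtain ⟨hab, hadj⟩ := he
      have hset : ((Finset.univ : Finset (Fin n × Fin n)).filter
          (fun p => p.1 ≠ p.2 ∧ ¬ G.Adj p.1 p.2)).filter
          (fun p => s(p.1, p.2) = s(a, b)) = {(a, b), (b, a)} := by
        ext ⟨x, y⟩
        simp only [Finset.mem_filter, Finset.mem_univ, true_and, Sym2.eq_iff,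
          Finset.mem_insert, Finset.mem_singleton, Prod.mk.injEq]
        constructor
        · exact fun h => h.2
        · rintro (⟨rfl, rfl⟩ | ⟨rfl, rfl⟩)
          · exact ⟨⟨hab, hadj⟩, Or.inl ⟨rfl, rfl⟩⟩
          · exact ⟨⟨fun h => hab h.symm, fun h => hadj h.symm⟩, Or.inr ⟨rfl, rfl⟩⟩
      rw [hset, Finset.sum_pair (by simpa using fun h => absurd h hab)]
      simp only [Sym2.lift_mk]
      ring
  · rintro ⟨x, y⟩ h
    simpa using h

/-- The edges inside a triple of distinct vertices. -/
lemma card_edges_triple {n : ℕ} (G : SimpleGraph (Fin n)) {a b c : Fin n}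
    (hab : a ≠ b) (hac : a ≠ c) (hbc : b ≠ c) :
    (G.edgeFinset.filter fun e => ∀ v ∈ e, v ∈ ({a, b, c} : Finset (Fin n))).card =
      (if G.Adj a b then 1 else 0) + (if G.Adj a c then 1 else 0) +
      (if G.Adj b c then 1 else 0) := by
  have h : (G.edgeFinset.filter fun e => ∀ v ∈ e, v ∈ ({a, b, c} : Finset (Fin n))) =
      ({s(a, b), s(a, c), s(b, c)} : Finset (Sym2 (Fin n))).filter (fun e => e ∈ G.edgeSet) := by
    ext e
    induction e using Sym2.ind with
    | _ x y =>
      simp only [Finset.mem_filter, SimpleGraph.mem_edgeFinset, SimpleGraph.mem_edgeSet,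
        Sym2.mem_iff, Finset.mem_insert, Finset.mem_singleton, Sym2.eq_iff,
        forall_eq_or_imp, forall_eq]
      constructor
      · rintro ⟨h, hx, hy⟩
        have := h.ne
        refine ⟨?_, h⟩
        grind
      · rintro ⟨h, h'⟩
        refine ⟨h', ?_⟩
        grind
  rw [h, Finset.card_filter, Finset.sum_insert, Finset.sum_insert, Finset.sum_singleton]
  · simp only [SimpleGraph.mem_edgeSet]
    ring
  · simp only [Finset.mem_singleton, Sym2.eq_iff]
    grind
  · simp only [Finset.mem_insert, Finset.mem_singleton, Sym2.eq_iff]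
    grind

/-- Ordered induced two-edge paths. -/
noncomputable def cherries {n : ℕ} (G : SimpleGraph (Fin n)) :
    Finset (Fin n × Fin n × Fin n) :=
  Finset.univ.filter fun p => p.1 ≠ p.2.2 ∧ G.Adj p.1 p.2.1 ∧ G.Adj p.2.1 p.2.2 ∧
    ¬ G.Adj p.1 p.2.2

lemma mem_t_iff {n : ℕ} (G : SimpleGraph (Fin n)) (S : Finset (Fin n)) :
    S ∈ ((Finset.powersetCard 3 (Finset.univ : Finset (Fin n))).filter
      fun S => (G.edgeFinset.filter fun e => ∀ v ∈ e, v ∈ S).card = 2) ↔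
    ∃ a b c, a ≠ c ∧ G.Adj a b ∧ G.Adj b c ∧ ¬ G.Adj a c ∧ S = {a, b, c} := by
  rw [Finset.mem_filter, Finset.mem_powersetCard_univ]
  constructor
  · rintro ⟨h3, h⟩
    obtain ⟨a, b, c, hab, hac, hbc, rfl⟩ := Finset.card_eq_three.1 h3
    rw [card_edges_triple G hab hac hbc] at h
    by_cases h1 : G.Adj a b <;> by_cases h2 : G.Adj a c <;> by_cases h4 : G.Adj b c <;>
      simp [h1, h2, h4] at h
    · exact ⟨b, a, c, hbc, h1.symm, h2, h4, by ext; simp; tauto⟩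
    · exact ⟨a, b, c, hac, h1, h4, h2, rfl⟩
    · exact ⟨a, c, b, hab, h2, h4.symm, h1, by ext; simp; tauto⟩
  · rintro ⟨a, b, c, hac, h1, h2, h3, rfl⟩
    refine ⟨Finset.card_eq_three.2 ⟨a, b, c, h1.ne, hac, h2.ne, rfl⟩, ?_⟩
    rw [card_edges_triple G h1.ne hac h2.ne]
    simp [h1, h2, h3]

lemma card_cherries {n : ℕ} (G : SimpleGraph (Fin n)) : (cherries G).card = 2 * t G := by
  unfold t
  rw [Finset.card_eq_sum_card_fiberwise
    (f := fun p : Fin n × Fin n × Fin n => ({p.1, p.2.1, p.2.2} : Finset (Fin n)))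
    (t := (Finset.powersetCard 3 (Finset.univ : Finset (Fin n))).filter
      fun S => (G.edgeFinset.filter fun e => ∀ v ∈ e, v ∈ S).card = 2)]
  · rw [Finset.sum_const_nat (m := 2), mul_comm]
    intro S hS
    obtain ⟨a, b, c, hac, h1, h2, h3, rfl⟩ := (mem_t_iff G S).1 hS
    have : (cherries G).filter (fun p => ({p.1, p.2.1, p.2.2} : Finset (Fin n)) = {a, b, c}) =
        {(a, b, c), (c, b, a)} := by
      ext ⟨x, y, z⟩
      simp only [cherries, Finset.mem_filter, Finset.mem_univ, true_and, Finset.mem_insert,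
        Finset.mem_singleton, Prod.mk.injEq]
      constructor
      · rintro ⟨⟨hxz, g1, g2, g3⟩, he⟩
        have hx : x ∈ ({a, b, c} : Finset (Fin n)) := by rw [← he]; simp
        have hy : y ∈ ({a, b, c} : Finset (Fin n)) := by rw [← he]; simp
        have hz : z ∈ ({a, b, c} : Finset (Fin n)) := by rw [← he]; simp
        simp only [Finset.mem_insert, Finset.mem_singleton] at hx hy hz
        have := g1.ne
        have := g2.ne
        have := h1.symm
        have := h2.symm
        rcases hx with rfl | rfl | rfl <;> rcases hy with rfl | rfl | rfl <;>
          rcases hz with rfl | rfl | rfl <;> simp_all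
      · rintro (⟨rfl, rfl, rfl⟩ | ⟨rfl, rfl, rfl⟩)
        · exact ⟨⟨hac, h1, h2, h3⟩, rfl⟩
        · exact ⟨⟨hac.symm, h2.symm, h1.symm, fun h => h3 h.symm⟩, by ext; simp; tauto⟩
    rw [this, Finset.card_pair]
    simp [hac]
  · rintro ⟨a, b, c⟩ h
    simp only [cherries, Finset.coe_filter, Finset.mem_univ, true_and, Set.mem_setOf_eq] at h
    exact Finset.mem_coe.2 ((mem_t_iff G _).2 ⟨a, b, c, h.1, h.2.1, h.2.2.1, h.2.2.2, rfl⟩)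

/-- Ordered quadruples counted by the degree products. -/
noncomputable def quads {n : ℕ} (G : SimpleGraph (Fin n)) :
    Finset (Fin n × Fin n × Fin n × Fin n) :=
  Finset.univ.filter fun p => p.2.1 ≠ p.2.2.1 ∧ ¬ G.Adj p.2.1 p.2.2.1 ∧ G.Adj p.1 p.2.1 ∧
    G.Adj p.2.2.1 p.2.2.2

lemma card_quads {n : ℕ} (G : SimpleGraph (Fin n)) :
    (quads G).card = ∑ p ∈ (Finset.univ : Finset (Fin n × Fin n)).filter
        (fun p => p.1 ≠ p.2 ∧ ¬ G.Adj p.1 p.2), G.degree p.1 * G.degree p.2 := by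
  rw [Finset.card_eq_sum_card_fiberwise
    (f := fun p : Fin n × Fin n × Fin n × Fin n => (p.2.1, p.2.2.1))
    (t := (Finset.univ : Finset (Fin n × Fin n)).filter
        (fun p => p.1 ≠ p.2 ∧ ¬ G.Adj p.1 p.2))]
  · refine Finset.sum_congr rfl ?_
    rintro ⟨v, w⟩ h
    simp only [Finset.mem_filter, Finset.mem_univ, true_and] at h
    rw [← SimpleGraph.card_neighborFinset_eq_degree, ← SimpleGraph.card_neighborFinset_eq_degree,
      ← Finset.card_product]
    refine Finset.card_bij' (fun p _ => (p.1, p.2.2.2)) (fun q _ => (q.1, v, w, q.2)) ?_ ?_ ?_ ?_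
    · rintro ⟨a, b, c, d⟩ h
      simp only [quads, Finset.mem_filter, Finset.mem_univ, true_and, Prod.mk.injEq] at h
      obtain ⟨⟨_, _, h1, h2⟩, rfl, rfl⟩ := h
      simp [h1.symm, h2]
    · rintro ⟨a, d⟩ h'
      simp only [Finset.mem_product, SimpleGraph.mem_neighborFinset] at h'
      simp [quads, h.1, h.2, h'.1.symm, h'.2]
    · rintro ⟨a, b, c, d⟩ h
      simp only [quads, Finset.mem_filter, Finset.mem_univ, true_and, Prod.mk.injEq] at h
      obtain ⟨_, rfl, rfl⟩ := h
      rfl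
    · rintro ⟨a, d⟩ _
      rfl
  · rintro ⟨a, b, c, d⟩ h
    simp only [quads, Finset.coe_filter, Finset.mem_univ, true_and, Set.mem_setOf_eq] at h ⊢
    exact ⟨h.1, h.2.1⟩

lemma card_quads' {n : ℕ} (G : SimpleGraph (Fin n)) :
    (quads G).card = (cherries G).card + A G := by
  rw [← Finset.card_filter_add_card_filter_not (s := quads G) (fun p => p.1 = p.2.2.2)]
  congr 1
  · refine Finset.card_bij' (fun p _ => (p.2.1, p.1, p.2.2.1))
      (fun q _ => (q.2.1, q.1, q.2.2, q.2.1)) ?_ ?_ ?_ ?_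
    · rintro ⟨a, b, c, d⟩ h
      simp only [quads, Finset.mem_filter, Finset.mem_univ, true_and] at h
      obtain ⟨⟨h1, h2, h3, h4⟩, rfl⟩ := h
      simp [cherries, h1, h2, h3.symm, h4.symm]
    · rintro ⟨a, b, c⟩ h
      simp only [cherries, Finset.mem_filter, Finset.mem_univ, true_and] at h
      obtain ⟨h1, h2, h3, h4⟩ := h
      simp [quads, h1, h2.symm, h3.symm, h4]
    · rintro ⟨a, b, c, d⟩ h
      simp only [quads, Finset.mem_filter, Finset.mem_univ, true_and] at h
      obtain ⟨_, rfl⟩ := h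
      rfl
    · rintro ⟨a, b, c⟩ _
      rfl
  · unfold A
    congr 1
    ext ⟨a, b, c, d⟩
    simp only [quads, Finset.mem_filter, Finset.mem_univ, true_and]
    constructor
    · rintro ⟨⟨h1, h2, h3, h4⟩, h5⟩
      refine ⟨h3.ne, ?_, h5, h1, ?_, h4.ne, h3, h4, h2⟩
      · rintro rfl
        exact h2 h3.symm
      · rintro rfl
        exact h2 h4.symm
    · rintro ⟨_, _, h5, h1, _, _, h3, h4, h2⟩
      exact ⟨⟨h1, h2, h3, h4⟩, h5⟩

/-- Twice the sum of `d_u d_v` over non-adjacent pairs equals twice the number of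
3-sets spanning exactly two edges plus the number of ordered alternating 3-edge paths. -/
theorem stmt_2 (n : ℕ) (G : SimpleGraph (Fin n)) :
    2 * nonEdgeDegSum G = 2 * t G + A G := by
  rw [two_mul_nonEdgeDegSum, ← card_quads, card_quads', card_cherries]
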